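/- Suppose n ≡ 1 (mod 4) and n ≥ 5. Then every (n−1)/2-isometry of C_n is an even isometry. -/

import Mathlib

/-!
For words `x`, `y` at distance `2i`, let `F` be the number of words at distance `p` from both, and
`G` the number of words at distance `p` from `x` and `p + 2` from `y`. In dimension `2p + 1` we have
`2F = C(2i, i) C(2j, j)` with `i + j = p + 1`, and a `p`-isometry preserves `F`. Central binomial
coefficients being strictly log-convex, for even `p = 2k` the minimum of `F` is attained exactly at
`i ∈ {k, k + 1}`, that is, at the distances `p` and `p + 2`. As distance `p` is preserved, so is
distance `p + 2`, and hence `G`. Finally `(i + 1) G = i F`, so `F` and `G` determine `i`.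
-/

open Finset
open scoped symmDiff

section CentralBinom

theorem centralBinom_succ_mul_lt {a b : ℕ} (h : a < b) :
    (a + 1).centralBinom * b.centralBinom < a.centralBinom * (b + 1).centralBinom := by
  have ha := Nat.succ_mul_centralBinom_succ a
  have hb := Nat.succ_mul_centralBinom_succ b
  have hpos := Nat.mul_pos a.centralBinom_pos b.centralBinom_pos
  refine Nat.lt_of_mul_lt_mul_left (a := (a + 1) * (b + 1)) ?_
  calc (a + 1) * (b + 1) * ((a + 1).centralBinom * b.centralBinom)
      = ((a + 1) * (a + 1).centralBinom) * ((b + 1) * b.centralBinom) := by ring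
    _ = 2 * (2 * a + 1) * (b + 1) * (a.centralBinom * b.centralBinom) := by rw [ha]; ring
    _ < 2 * (2 * b + 1) * (a + 1) * (a.centralBinom * b.centralBinom) :=
        Nat.mul_lt_mul_of_pos_right (by linarith) hpos
    _ = ((a + 1) * a.centralBinom) * ((b + 1) * (b + 1).centralBinom) := by rw [hb]; ring
    _ = (a + 1) * (b + 1) * (a.centralBinom * (b + 1).centralBinom) := by ring

theorem centralBinom_add_mul_lt {a b t : ℕ} (ht : t ≠ 0) (h : a + t ≤ b) :
    (a + t).centralBinom * b.centralBinom < a.centralBinom * (b + t).centralBinom := by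
  induction t, Nat.one_le_iff_ne_zero.mpr ht using Nat.le_induction generalizing a with
  | base => exact centralBinom_succ_mul_lt h
  | succ t ht' ih =>
    calc (a + (t + 1)).centralBinom * b.centralBinom
        = (a + 1 + t).centralBinom * b.centralBinom := by rw [add_right_comm, add_assoc]
      _ < (a + 1).centralBinom * (b + t).centralBinom := ih (by lia) (by lia)
      _ < a.centralBinom * (b + (t + 1)).centralBinom := centralBinom_succ_mul_lt (by lia)

theorem eq_or_eq_succ_of_centralBinom_mul_eq {i j k : ℕ} (hij : i + j = 2 * k + 1)
    (h : i.centralBinom * j.centralBinom = k.centralBinom * (k + 1).centralBinom) :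
    i = k ∨ i = k + 1 := by
  wlog hle : i ≤ j generalizing i j
  · have := this ((add_comm j i).trans hij) ((mul_comm _ _).trans h) (by lia)
    lia
  obtain ⟨t, rfl⟩ : ∃ t, k = i + t := Nat.exists_eq_add_of_le (by lia)
  obtain rfl : j = i + t + 1 + t := by lia
  by_contra! hne
  exact h.not_gt (centralBinom_add_mul_lt (by lia) (by lia))

theorem two_mul_choose_half (m : ℕ) : 2 * (2 * m + 1).choose m = (m + 1).centralBinom := by
  rw [Nat.centralBinom, mul_add_one, Nat.choose_succ_succ, Nat.choose_symm_half, two_mul]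

theorem choose_two_mul_succ_mul (i : ℕ) :
    (2 * (i + 1)).choose i * (i + 2) = (i + 1).centralBinom * (i + 1) := by
  rw [Nat.centralBinom, Nat.choose_succ_right_eq]
  congr 1
  lia

end CentralBinom

section FinsetCard

variable {α : Type*} [DecidableEq α]

theorem card_symmDiff_add_two_mul_card_inter (s t : Finset α) :
    #(s ∆ t) + 2 * #(s ∩ t) = #s + #t := by
  have hs := card_sdiff_add_card_inter s t
  have ht := card_sdiff_add_card_inter t s
  rw [inter_comm] at ht
  rw [symmDiff_def, sup_eq_union, card_union_of_disjoint disjoint_sdiff_sdiff]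
  lia

theorem card_filter_card_inter_card_sdiff [Fintype α] (t : Finset α) (i b : ℕ) :
    #{s : Finset α | #(t ∩ s) = i ∧ #(s \ t) = b} = (#t).choose i * (#tᶜ).choose b := by
  rw [← card_powersetCard, ← card_powersetCard, ← card_product]
  refine card_nbij' (fun s => (t ∩ s, s \ t)) (fun u => u.1 ∪ u.2) ?_ ?_ ?_ ?_
  · intro s hs
    grind [mem_compl]
  · rintro ⟨u, v⟩ h
    have hu : t ∩ (u ∪ v) = u := by grind [mem_compl]
    have hv : (u ∪ v) \ t = v := by grind [mem_compl]
    grind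
  · intro s _
    grind
  · rintro ⟨u, v⟩ h
    ext w <;> grind [mem_compl]

end FinsetCard

section CommonSphere

variable {ι : Type*} [Fintype ι] [DecidableEq ι] {β : ι → Type*} [∀ t, Fintype (β t)]
  [∀ t, DecidableEq (β t)]

/-- The intersection of the Hamming spheres of radius `p` around `x` and of radius `q` around `y`.
Its cardinality is the invariant by which distances are recognised. -/
def commonSphere (x y : ∀ t, β t) (p q : ℕ) : Finset (∀ t, β t) :=
  {z | hammingDist x z = p ∧ hammingDist y z = q}

theorem mem_commonSphere {x y z : ∀ t, β t} {p q : ℕ} :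
    z ∈ commonSphere x y p q ↔ hammingDist x z = p ∧ hammingDist y z = q := by
  simp only [commonSphere, mem_filter_univ]

theorem commonSphere_self_eq_empty (x : ∀ t, β t) {p q : ℕ} (h : p ≠ q) :
    commonSphere x x p q = ∅ := by
  ext z
  simp only [mem_commonSphere, notMem_empty, iff_false]
  lia

end CommonSphere

section BooleanCube

variable {ι : Type*} [Fintype ι]

section DiffSet

variable [DecidableEq ι]

/-- The set of coordinates in which `x` and `y` differ, as a function of `y`: this identifies the
Boolean cube with the subsets of its index set, `x` being sent to `∅`. -/
def diffSet (x : ι → ZMod 2) : (ι → ZMod 2) ≃ Finset ι where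
  toFun y := {t | x t ≠ y t}
  invFun s t := if t ∈ s then x t + 1 else x t
  left_inv y := by
    have add_one_eq : ∀ a b : ZMod 2, a ≠ b → a + 1 = b := by decide
    ext t
    by_cases ht : x t = y t <;> simp [ht, add_one_eq (x t) (y t)]
  right_inv s := by
    ext t
    by_cases ht : t ∈ s <;> simp [ht]

theorem card_diffSet (x y : ι → ZMod 2) : #(diffSet x y) = hammingDist x y := rfl

theorem card_symmDiff_diffSet (x y z : ι → ZMod 2) :
    #(diffSet x y ∆ diffSet x z) = hammingDist y z := by
  have xor_ne_iff : ∀ a b c : ZMod 2, ¬(a ≠ b ↔ a ≠ c) ↔ b ≠ c := by decide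
  rw [← card_diffSet]
  congr 1
  ext t
  have := xor_ne_iff (x t) (y t) (z t)
  simp only [diffSet, Equiv.coe_fn_mk, mem_symmDiff, mem_filter_univ]
  tauto

end DiffSet

theorem even_hammingDist_add_add (x y z : ι → ZMod 2) :
    Even (hammingDist x y + hammingDist x z + hammingDist y z) := by
  classical
  have := card_symmDiff_add_two_mul_card_inter (diffSet x y) (diffSet x z)
  simp only [card_diffSet, card_symmDiff_diffSet] at this
  grind

variable [DecidableEq ι]

theorem card_commonSphere {x y : ι → ZMod 2} {i j c : ℕ} (hxy : hammingDist x y = i + j)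
    (hc : Fintype.card ι = i + j + c) (b : ℕ) :
    #(commonSphere x y (i + b) (j + b)) = (i + j).choose i * c.choose b := by
  have hcompl : #(diffSet x y)ᶜ = c := by rw [card_compl, card_diffSet]; lia
  have hcard : #(diffSet x y) = i + j := hxy
  rw [← hcompl, ← hcard, ← card_filter_card_inter_card_sdiff]
  refine card_equiv (diffSet x) fun z => ?_
  have hS := card_inter_add_card_sdiff (diffSet x z) (diffSet x y)
  have hsymm := card_symmDiff_add_two_mul_card_inter (diffSet x y) (diffSet x z)
  rw [card_symmDiff_diffSet] at hsymm
  rw [inter_comm] at hS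
  simp only [mem_commonSphere, mem_filter_univ, ← card_diffSet x z]
  lia

variable {p i j : ℕ} {x y : ι → ZMod 2}

theorem two_mul_card_commonSphere_self (hι : Fintype.card ι = 2 * p + 1)
    (hxy : hammingDist x y = 2 * i) (hij : i + j = p + 1) :
    2 * #(commonSphere x y p p) = i.centralBinom * j.centralBinom := by
  have hle : hammingDist x y ≤ 2 * p + 1 := hι ▸ hammingDist_le_card_fintype
  obtain ⟨m, rfl⟩ : ∃ m, j = m + 1 := Nat.exists_eq_add_one.mpr (by lia)
  obtain rfl : p = i + m := by lia
  rw [card_commonSphere (hxy.trans (two_mul i)) (c := 2 * m + 1) (by lia), ← two_mul,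
    ← Nat.centralBinom, ← two_mul_choose_half]
  ring

theorem succ_mul_card_commonSphere_add_two (hι : Fintype.card ι = 2 * p + 1)
    (hxy : hammingDist x y = 2 * i) :
    (i + 1) * #(commonSphere x y p (p + 2)) = i * #(commonSphere x y p p) := by
  have hle : hammingDist x y ≤ 2 * p + 1 := hι ▸ hammingDist_le_card_fintype
  obtain _ | i := i
  · obtain rfl : x = y := hammingDist_eq_zero.mp hxy
    simp [commonSphere_self_eq_empty]
  obtain ⟨m, rfl⟩ : ∃ m, p = i + 1 + m := Nat.exists_eq_add_of_le (by lia)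
  have hF : #(commonSphere x y (i + 1 + m) (i + 1 + m)) =
      (i + 1).centralBinom * (2 * m + 1).choose m := by
    rw [card_commonSphere (c := 2 * m + 1) (by lia) (by lia), ← two_mul, ← Nat.centralBinom]
  have hG : #(commonSphere x y (i + (m + 1)) (i + 2 + (m + 1))) =
      (2 * (i + 1)).choose i * (2 * m + 1).choose m := by
    rw [card_commonSphere (c := 2 * m + 1) (by lia) (by lia), Nat.choose_symm_half]
    congr 2
    lia
  rw [hF, show i + 1 + m = i + (m + 1) by lia, show i + (m + 1) + 2 = i + 2 + (m + 1) by lia, hG]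
  linear_combination (2 * m + 1).choose m * choose_two_mul_succ_mul i

theorem even_hammingDist_iff_commonSphere_nonempty (hι : Fintype.card ι = 2 * p + 1) :
    Even (hammingDist x y) ↔ (commonSphere x y p p).Nonempty := by
  constructor
  · rintro ⟨i, hi⟩
    have hle : hammingDist x y ≤ 2 * p + 1 := hι ▸ hammingDist_le_card_fintype
    have hF := two_mul_card_commonSphere_self hι (hi.trans (two_mul i).symm)
      (j := p + 1 - i) (by lia)
    have hpos := Nat.mul_pos i.centralBinom_pos (p + 1 - i).centralBinom_pos
    exact card_pos.mp (by lia)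
  · rintro ⟨z, hz⟩
    rw [mem_commonSphere] at hz
    have := even_hammingDist_add_add x y z
    grind

theorem hammingDist_eq_of_card_commonSphere_eq {x' y' : ι → ZMod 2}
    (hι : Fintype.card ι = 2 * p + 1)
    (hxy : Even (hammingDist x y)) (hxy' : Even (hammingDist x' y'))
    (hF : #(commonSphere x y p p) = #(commonSphere x' y' p p))
    (hG : #(commonSphere x y p (p + 2)) = #(commonSphere x' y' p (p + 2))) :
    hammingDist x y = hammingDist x' y' := by
  have hpos := card_pos.mpr ((even_hammingDist_iff_commonSphere_nonempty hι).mp hxy)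
  obtain ⟨i, hi⟩ := hxy.exists_two_nsmul
  obtain ⟨j, hj⟩ := hxy'.exists_two_nsmul
  have hratio := succ_mul_card_commonSphere_add_two hι hi
  have hratio' := succ_mul_card_commonSphere_add_two hι hj
  rw [← hF, ← hG] at hratio'
  set F := #(commonSphere x y p p)
  set G := #(commonSphere x y p (p + 2))
  have hGF : (F : ℤ) - G ≠ 0 := by
    intro h
    have hFG : F = G := by lia
    rw [← hFG] at hratio
    lia
  have hij : (i : ℤ) * (F - G) = j * (F - G) := by
    zify at hratio hratio'
    linear_combination hratio' - hratio
  have := mul_right_cancel₀ hGF hij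
  lia

end BooleanCube

section Isometry

variable {ι : Type*} [Fintype ι]

section Alphabet

variable {β : ι → Type*} [∀ t, DecidableEq (β t)]

/-- A `p`-isometry of a Hamming space: a bijection, here a bundled permutation, that preserves the
distance `p`. -/
def IsPIsometry (p : ℕ) (φ : Equiv.Perm (∀ t, β t)) : Prop :=
  ∀ x y, hammingDist x y = p → hammingDist (φ x) (φ y) = p

theorem IsPIsometry.hammingDist_eq_iff [∀ t, Finite (β t)] {p : ℕ} {φ : Equiv.Perm (∀ t, β t)}
    (hφ : IsPIsometry p φ) (x y : ∀ t, β t) :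
    hammingDist (φ x) (φ y) = p ↔ hammingDist x y = p := by
  refine ⟨fun h => ?_, hφ x y⟩
  have := Equiv.Perm.perm_symm_on_of_perm_on_finite (f := φ.prodCongr φ)
    (p := fun u => hammingDist u.1 u.2 = p) (fun u => hφ u.1 u.2) (x := (φ x, φ y)) h
  simpa using this

theorem IsPIsometry.card_commonSphere_eq [DecidableEq ι] [∀ t, Fintype (β t)] {p q : ℕ}
    {φ : Equiv.Perm (∀ t, β t)} (hp : IsPIsometry p φ) (hq : IsPIsometry q φ) (x y : ∀ t, β t) :
    #(commonSphere (φ x) (φ y) p q) = #(commonSphere x y p q) :=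
  (card_equiv φ fun z => by
    simp only [mem_commonSphere, hp.hammingDist_eq_iff, hq.hammingDist_eq_iff]).symm

end Alphabet

variable {p k : ℕ} {φ : Equiv.Perm (ι → ZMod 2)}

theorem IsPIsometry.even_hammingDist_iff (hφ : IsPIsometry p φ)
    (hι : Fintype.card ι = 2 * p + 1) (x y : ι → ZMod 2) :
    Even (hammingDist (φ x) (φ y)) ↔ Even (hammingDist x y) := by
  classical
  rw [even_hammingDist_iff_commonSphere_nonempty hι, even_hammingDist_iff_commonSphere_nonempty hι,
    ← card_pos, ← card_pos, hφ.card_commonSphere_eq hφ]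

theorem IsPIsometry.add_two (hφ : IsPIsometry (2 * k) φ)
    (hι : Fintype.card ι = 2 * (2 * k) + 1) : IsPIsometry (2 * k + 2) φ := by
  classical
  intro x y hxy
  have hne : hammingDist (φ x) (φ y) ≠ 2 * k := by
    rw [Ne, hφ.hammingDist_eq_iff]
    lia
  obtain ⟨i, hi⟩ := ((hφ.even_hammingDist_iff hι x y).mpr ⟨k + 1, by lia⟩).exists_two_nsmul
  have hle : hammingDist (φ x) (φ y) ≤ 2 * (2 * k) + 1 := hι ▸ hammingDist_le_card_fintype
  have hij : i + (2 * k + 1 - i) = 2 * k + 1 := by lia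
  have hF : i.centralBinom * (2 * k + 1 - i).centralBinom =
      k.centralBinom * (k + 1).centralBinom := by
    rw [← two_mul_card_commonSphere_self hι hi hij, hφ.card_commonSphere_eq hφ,
      two_mul_card_commonSphere_self hι (i := k + 1) (j := k) hxy (by lia), mul_comm]
  obtain rfl | rfl := eq_or_eq_succ_of_centralBinom_mul_eq hij hF
  · exact absurd hi hne
  · exact hi

theorem IsPIsometry.hammingDist_eq_of_even (hφ : IsPIsometry (2 * k) φ)
    (hι : Fintype.card ι = 2 * (2 * k) + 1) {x y : ι → ZMod 2} (hxy : Even (hammingDist x y)) :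
    hammingDist (φ x) (φ y) = hammingDist x y := by
  classical
  exact hammingDist_eq_of_card_commonSphere_eq hι ((hφ.even_hammingDist_iff hι x y).mpr hxy) hxy
    (hφ.card_commonSphere_eq hφ x y) (hφ.card_commonSphere_eq (hφ.add_two hι) x y)

end Isometry

/-- For `n ≡ 1 (mod 4)`, `n ≥ 5`, every `(n-1)/2`-isometry of the Boolean cube `C_n` is an
even isometry. -/
theorem halfMinusOneIsometry_one_mod_four (n : ℕ) (hn : n % 4 = 1) (hn5 : 5 ≤ n)
    (φ : (Fin n → ZMod 2) → Fin n → ZMod 2) (hbij : Function.Bijective φ)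
    (hφ : ∀ x y, hammingDist x y = (n - 1) / 2 →
      hammingDist (φ x) (φ y) = (n - 1) / 2) :
    ∀ x y, Even (hammingDist x y) → hammingDist (φ x) (φ y) = hammingDist x y := by
  intro x y hxy
  obtain ⟨k, rfl⟩ : ∃ k, n = 2 * (2 * k) + 1 := ⟨n / 4, by lia⟩
  have hiso : IsPIsometry (2 * k) (Equiv.ofBijective φ hbij) := by
    rwa [Nat.add_sub_cancel, Nat.mul_div_cancel_left _ two_pos] at hφ
  exact hiso.hammingDist_eq_of_even (Fintype.card_fin _) hxy
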